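/- arXiv:1911.02823 — 5 statements merged into one kernel-verified Lean document; each statement's English description precedes it below -/
import Mathlib

section
/- Let x, y be unit quaternions and α, β imaginary quaternions, and set Z = (xα, yβ), so that PZ = (xβ, yα). Then G(Z, PZ) = (2/√3)·(x(α×β), y(α×β)) and J·G(Z, PZ) = (2/3)·(x(α×β), −y(α×β)). -/
open Quaternion

/-- The cross product `α×β = (αβ − βα)/2` of (imaginary) quaternions. -/
noncomputable def qcross (x y : ℍ[ℝ]) : ℍ[ℝ] := (x * y - y * x) / 2

/-- The almost complex structure of the nearly Kähler `S³ × S³` at `(p, q)`. -/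
noncomputable def Jmap (p q : ℍ[ℝ]) (Z : ℍ[ℝ] × ℍ[ℝ]) : ℍ[ℝ] × ℍ[ℝ] :=
  ((Real.sqrt 3)⁻¹ • (2 * (p * q⁻¹ * Z.2) - Z.1),
   (Real.sqrt 3)⁻¹ • (-(2 * (q * p⁻¹ * Z.1)) + Z.2))

/-- The almost product structure `P(U,V) = (pq⁻¹V, qp⁻¹U)` at `(p, q)`. -/
noncomputable def Pmap (p q : ℍ[ℝ]) (Z : ℍ[ℝ] × ℍ[ℝ]) : ℍ[ℝ] × ℍ[ℝ] :=
  (p * q⁻¹ * Z.2, q * p⁻¹ * Z.1)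

/-- The tensor `G = ∇J` of the nearly Kähler `S³ × S³` at `(p, q)`, for tangent vectors
`X = (pα, qβ)`, `Y = (pγ, qδ)`. -/
noncomputable def Gmap (p q : ℍ[ℝ]) (X Y : ℍ[ℝ] × ℍ[ℝ]) : ℍ[ℝ] × ℍ[ℝ] :=
  ((2 / (3 * Real.sqrt 3)) •
      (p * (qcross (q⁻¹ * X.2) (p⁻¹ * Y.1) + qcross (p⁻¹ * X.1) (q⁻¹ * Y.2) +
            qcross (p⁻¹ * X.1) (p⁻¹ * Y.1) - 2 * qcross (q⁻¹ * X.2) (q⁻¹ * Y.2))),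
   (2 / (3 * Real.sqrt 3)) •
      (q * (-qcross (p⁻¹ * X.1) (q⁻¹ * Y.2) - qcross (q⁻¹ * X.2) (p⁻¹ * Y.1) +
            2 * qcross (p⁻¹ * X.1) (p⁻¹ * Y.1) - qcross (q⁻¹ * X.2) (q⁻¹ * Y.2))))

/-- For unit quaternions `x, y` and imaginary `α, β`, with `Z = (xα, yβ)` (so that
`PZ = (xβ, yα)`), one has `G(Z,PZ) = (2/√3)(x(α×β), y(α×β))` and
`J G(Z,PZ) = (2/3)(x(α×β), −y(α×β))`. -/
theorem G_Z_PZ (x y : ℍ[ℝ]) (hx : ‖x‖ = 1) (hy : ‖y‖ = 1)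
    (α β : ℍ[ℝ]) (hα : α.re = 0) (hβ : β.re = 0) :
    Gmap x y (x * α, y * β) (Pmap x y (x * α, y * β)) =
      ((2 / Real.sqrt 3) • (x * qcross α β), (2 / Real.sqrt 3) • (y * qcross α β)) ∧
    Jmap x y (Gmap x y (x * α, y * β) (Pmap x y (x * α, y * β))) =
      ((2/3 : ℝ) • (x * qcross α β), (2/3 : ℝ) • (-(y * qcross α β))) := by
  have hx0 : x ≠ 0 := by
    rintro rfl
    simp at hx
  have hy0 : y ≠ 0 := by
    rintro rfl
    simp at hy
  have ex : ∀ z : ℍ[ℝ], x⁻¹ * (x * z) = z := fun z => inv_mul_cancel_left₀ hx0 z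
  have ey : ∀ z : ℍ[ℝ], y⁻¹ * (y * z) = z := fun z => inv_mul_cancel_left₀ hy0 z
  have haa : ∀ z : ℍ[ℝ], qcross z z = 0 := fun z => by simp [qcross]
  have hba : qcross β α = -qcross α β := by
    unfold qcross
    rw [← neg_div, neg_sub]
  have h3 : Real.sqrt 3 ≠ 0 := by positivity
  have hs : Real.sqrt 3 * Real.sqrt 3 = 3 := Real.mul_self_sqrt (by norm_num)
  have two : ∀ z : ℍ[ℝ], 2 * z = (2 : ℝ) • z := fun z => by
    rw [two_mul, two_smul]
  have hG : Gmap x y (x * α, y * β) (Pmap x y (x * α, y * β)) =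
      ((2 / Real.sqrt 3) • (x * qcross α β), (2 / Real.sqrt 3) • (y * qcross α β)) := by
    have h : 2 / Real.sqrt 3 = 2 / (3 * Real.sqrt 3) * 3 := by field_simp
    simp only [Gmap, Pmap, mul_assoc, ex, ey, haa, hba]
    rw [h, mul_smul, mul_smul, ← mul_smul_comm (3 : ℝ), ← mul_smul_comm (3 : ℝ)]
    simp only [two]
    refine Prod.ext ?_ ?_
    · dsimp only
      congr 2
      module
    · dsimp only
      congr 2
      module
  refine ⟨hG, ?_⟩
  rw [hG]
  have h : (2 / 3 : ℝ) = (Real.sqrt 3)⁻¹ * (2 / Real.sqrt 3) := by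
    field_simp
    nlinarith [hs]
  simp only [Jmap, mul_assoc, mul_smul_comm, ex, ey, two]
  rw [h, mul_smul, mul_smul]
  refine Prod.ext ?_ ?_
  · dsimp only
    congr 1
    module
  · dsimp only
    congr 1
    module
end

section
/- Let c₁, c₂ ∈ Im ℍ \ {0} and d₁ ∈ ℝ, and set a = ((1+d₁)/2)‖c₁‖, ã = ((1−d₁)/2)‖c₁‖, b = (1/2)‖c₂‖, c = (2/3)‖c₁‖. Then the functions α(t) = a·i + b·cos(ct)·j − b·sin(ct)·k and β(t) = ã·i − b·cos(ct)·j + b·sin(ct)·k satisfy the geodesic equations α'(t) = (2/3)·α(t)×β(t) and β'(t) = −(2/3)·α(t)×β(t) for all t. -/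
open Quaternion

/-- The imaginary unit `i` of the quaternions. -/
def qi : ℍ[ℝ] := ⟨0, 1, 0, 0⟩

/-- The imaginary unit `j` of the quaternions. -/
def qj : ℍ[ℝ] := ⟨0, 0, 1, 0⟩

/-- The imaginary unit `k` of the quaternions. -/
def qk : ℍ[ℝ] := ⟨0, 0, 0, 1⟩

theorem qi_re : qi.re = 0 := rfl
theorem qi_imI : qi.imI = 1 := rfl
theorem qi_imJ : qi.imJ = 0 := rfl
theorem qi_imK : qi.imK = 0 := rfl
theorem qj_re : qj.re = 0 := rfl
theorem qj_imI : qj.imI = 0 := rfl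
theorem qj_imJ : qj.imJ = 1 := rfl
theorem qj_imK : qj.imK = 0 := rfl
theorem qk_re : qk.re = 0 := rfl
theorem qk_imI : qk.imI = 0 := rfl
theorem qk_imJ : qk.imJ = 0 := rfl
theorem qk_imK : qk.imK = 1 := rfl

theorem qcross_formula (a a' p q : ℝ) :
    qcross (a • qi + p • qj - q • qk) (a' • qi - p • qj + q • qk)
      = (-((a + a') * q)) • qj - ((a + a') * p) • qk := by
  have h2 : ∀ x : ℍ[ℝ], x / 2 = (1/2 : ℝ) • x := by
    intro x
    have h : (2 : ℍ[ℝ]) ≠ 0 := by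
      rw [← one_add_one_eq_two]
      intro h
      have h' := congrArg QuaternionAlgebra.re h
      rw [Quaternion.re_add, Quaternion.re_one, Quaternion.re_zero] at h'
      norm_num at h'
    rw [div_eq_iff h, mul_two, ← add_smul]
    norm_num
  unfold qcross
  rw [h2]
  ext <;> simp [qi_re, qi_imI, qi_imJ, qi_imK, qj_re, qj_imI, qj_imJ, qj_imK,
    qk_re, qk_imI, qk_imJ, qk_imK] <;> ring

/-- For `c₁, c₂ ∈ Im ℍ \ {0}`, `d₁ ∈ ℝ`, with `a = ((1+d₁)/2)‖c₁‖`, `a' = ((1−d₁)/2)‖c₁‖`,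
`b = (1/2)‖c₂‖`, `c = (2/3)‖c₁‖`, the functions
`α(t) = a i + b cos(ct) j − b sin(ct) k` and `β(t) = a' i − b cos(ct) j + b sin(ct) k`
satisfy the geodesic equations `α' = (2/3) α×β` and `β' = −(2/3) α×β`. -/
theorem explicit_alpha_beta_solve_geodesic_system
    (c₁ c₂ : ℍ[ℝ]) (hc₁im : c₁.re = 0) (hc₂im : c₂.re = 0)
    (hc₁ : c₁ ≠ 0) (hc₂ : c₂ ≠ 0) (d₁ a a' b c : ℝ)
    (ha : a = (1 + d₁) / 2 * ‖c₁‖) (ha2 : a' = (1 - d₁) / 2 * ‖c₁‖)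
    (hb : b = (1/2) * ‖c₂‖) (hc : c = (2/3) * ‖c₁‖) :
    (∀ t, HasDerivAt
      (fun s => a • qi + (b * Real.cos (c * s)) • qj - (b * Real.sin (c * s)) • qk)
      ((2/3 : ℝ) • qcross
        (a • qi + (b * Real.cos (c * t)) • qj - (b * Real.sin (c * t)) • qk)
        (a' • qi - (b * Real.cos (c * t)) • qj + (b * Real.sin (c * t)) • qk)) t) ∧
    (∀ t, HasDerivAt
      (fun s => a' • qi - (b * Real.cos (c * s)) • qj + (b * Real.sin (c * s)) • qk)
      (-((2/3 : ℝ) • qcross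
        (a • qi + (b * Real.cos (c * t)) • qj - (b * Real.sin (c * t)) • qk)
        (a' • qi - (b * Real.cos (c * t)) • qj + (b * Real.sin (c * t)) • qk))) t) := by
  have hs : a + a' = ‖c₁‖ := by rw [ha, ha2]; ring
  have hcos : ∀ t : ℝ, HasDerivAt (fun s => b * Real.cos (c * s))
      (b * (-Real.sin (c * t) * (c * 1))) t := fun t =>
    (((hasDerivAt_id' t).const_mul c).cos).const_mul b
  have hsin : ∀ t : ℝ, HasDerivAt (fun s => b * Real.sin (c * s))
      (b * (Real.cos (c * t) * (c * 1))) t := fun t =>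
    (((hasDerivAt_id' t).const_mul c).sin).const_mul b
  constructor
  · intro t
    rw [qcross_formula, hs]
    have h := (((hcos t).smul_const qj).const_add (a • qi)).sub ((hsin t).smul_const qk)
    refine HasDerivAt.congr_deriv h ?_
    rw [hc]
    module
  · intro t
    rw [qcross_formula, hs]
    have h := (((hcos t).smul_const qj).const_sub (a' • qi)).add ((hsin t).smul_const qk)
    refine HasDerivAt.congr_deriv h ?_
    rw [hc]
    module
end

section
/- Let a, b, c ∈ ℝ and let g₁, g₂: ℝ → ℂ be differentiable functions satisfying g₁'(t) = g₁(t)·a·i − conj(g₂(t))·b·e^{ict} and g₂'(t) = g₂(t)·a·i + conj(g₁(t))·b·e^{ict} for all t. Then g₁ and g₂ are twice differentiable and satisfy the second order equations g₁''(t) − c·i·g₁'(t) + (a² + b² − ac)·g₁(t) = 0 and g₂''(t) − c·i·g₂'(t) + (a² + b² − ac)·g₂(t) = 0 for all t. -/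
open Complex

/-- If `g₁, g₂ : ℝ → ℂ` satisfy the first order system
`g₁' = g₁ a i − conj(g₂) b e^{ict}`, `g₂' = g₂ a i + conj(g₁) b e^{ict}`,
then they are twice differentiable and satisfy the second order equations
`g₁'' − c i g₁' + (a² + b² − ac) g₁ = 0` and `g₂'' − c i g₂' + (a² + b² − ac) g₂ = 0`. -/
theorem second_order_from_first_order_system (a b c : ℝ) (g₁ g₂ : ℝ → ℂ)
    (h₁ : ∀ t : ℝ, HasDerivAt g₁
      (g₁ t * (a : ℂ) * Complex.I - (starRingEnd ℂ) (g₂ t) * (b : ℂ) * Complex.exp (Complex.I * (c : ℂ) * (t : ℂ))) t)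
    (h₂ : ∀ t : ℝ, HasDerivAt g₂
      (g₂ t * (a : ℂ) * Complex.I + (starRingEnd ℂ) (g₁ t) * (b : ℂ) * Complex.exp (Complex.I * (c : ℂ) * (t : ℂ))) t) :
    (∀ t : ℝ, HasDerivAt (deriv g₁)
      ((c : ℂ) * Complex.I * deriv g₁ t - ((a : ℂ)^2 + (b : ℂ)^2 - (a : ℂ) * (c : ℂ)) * g₁ t) t) ∧
    (∀ t : ℝ, HasDerivAt (deriv g₂)
      ((c : ℂ) * Complex.I * deriv g₂ t - ((a : ℂ)^2 + (b : ℂ)^2 - (a : ℂ) * (c : ℂ)) * g₂ t) t) := by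
  have d₁ : deriv g₁ = fun t : ℝ => g₁ t * (a : ℂ) * Complex.I - (starRingEnd ℂ) (g₂ t) * (b : ℂ) * Complex.exp (Complex.I * (c : ℂ) * (t : ℂ)) :=
    funext fun t => (h₁ t).deriv
  have d₂ : deriv g₂ = fun t : ℝ => g₂ t * (a : ℂ) * Complex.I + (starRingEnd ℂ) (g₁ t) * (b : ℂ) * Complex.exp (Complex.I * (c : ℂ) * (t : ℂ)) :=
    funext fun t => (h₂ t).deriv
  have hE : ∀ t : ℝ, HasDerivAt (fun t : ℝ => Complex.exp (Complex.I * (c : ℂ) * (t : ℂ)))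
      (Complex.exp (Complex.I * (c : ℂ) * (t : ℂ)) * (Complex.I * (c : ℂ) * 1)) t := fun t =>
    ((Complex.ofRealCLM.hasDerivAt (x := t)).const_mul (Complex.I * (c : ℂ))).cexp
  have hconj : ∀ t : ℝ, (starRingEnd ℂ) (Complex.exp (Complex.I * (c : ℂ) * (t : ℂ))) * Complex.exp (Complex.I * (c : ℂ) * (t : ℂ)) = 1 := by
    intro t
    rw [← Complex.exp_conj, ← Complex.exp_add]
    simp
  have hs : ∀ (g : ℝ → ℂ) (g' : ℂ) (t : ℝ), HasDerivAt g g' t →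
      HasDerivAt (fun t => (starRingEnd ℂ) (g t)) ((starRingEnd ℂ) g') t := fun g g' t h =>
    (Complex.conjCLE.toContinuousLinearMap.hasFDerivAt (x := g t)).comp_hasDerivAt t h
  constructor
  · intro t
    rw [d₁]
    have h := (((h₁ t).mul_const (a : ℂ)).mul_const Complex.I).sub
      (((hs _ _ t (h₂ t)).mul_const (b : ℂ)).mul (hE t))
    refine h.congr_deriv ?_
    simp only [map_add, map_mul, Complex.conj_conj, Complex.conj_ofReal, Complex.conj_I]
    have e := hconj t
    linear_combination (-(b : ℂ) ^ 2 * g₁ t) * e + (g₁ t * ((a : ℂ) ^ 2 - a * c)) * Complex.I_sq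
  · intro t
    rw [d₂]
    have h := (((h₂ t).mul_const (a : ℂ)).mul_const Complex.I).add
      (((hs _ _ t (h₁ t)).mul_const (b : ℂ)).mul (hE t))
    refine h.congr_deriv ?_
    simp only [map_sub, map_mul, Complex.conj_conj, Complex.conj_ofReal, Complex.conj_I]
    have e := hconj t
    linear_combination (-(b : ℂ) ^ 2 * g₂ t) * e + (g₂ t * ((a : ℂ) ^ 2 - a * c)) * Complex.I_sq
end

section
/- Let α, β: ℝ → Im ℍ be differentiable with α'(t) = (2/3)·α(t)×β(t) and β'(t) = −(2/3)·α(t)×β(t) for all t. Then α and β are both constant functions if and only if α(0)×β(0) = 0. -/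
open Quaternion

theorem qcross_eq (x y : ℍ[ℝ]) : qcross x y = (1/2 : ℝ) • (x * y - y * x) := by
  have h : (2 : ℍ[ℝ]) = ((2 : ℝ) : ℍ[ℝ]) := (map_ofNat (algebraMap ℝ ℍ[ℝ]) 2).symm
  rw [qcross, div_eq_mul_inv, h, ← Quaternion.coe_inv, Quaternion.mul_coe_eq_smul]
  norm_num

theorem inner_aux (a b w : ℍ[ℝ]) (k : ℝ) :
    inner ℝ w ((k • w) * b + a * (-(k • w)) - ((-(k • w)) * a + b * (k • w))) = 0 := by
  rw [Quaternion.inner_def]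
  simp
  ring

/-- If `α, β : ℝ → Im ℍ` satisfy `α' = (2/3) α×β` and `β' = −(2/3) α×β`, then `α` and `β`
are both constant if and only if `α(0)×β(0) = 0`. -/
theorem constant_iff_cross_zero (α β : ℝ → ℍ[ℝ])
    (hαim : ∀ t, (α t).re = 0) (hβim : ∀ t, (β t).re = 0)
    (hα : ∀ t, HasDerivAt α ((2/3 : ℝ) • qcross (α t) (β t)) t)
    (hβ : ∀ t, HasDerivAt β (-((2/3 : ℝ) • qcross (α t) (β t))) t) :
    ((∀ t, α t = α 0) ∧ (∀ t, β t = β 0)) ↔ qcross (α 0) (β 0) = 0 := by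
  constructor
  · rintro ⟨h, -⟩
    have h1 : α = fun _ => α 0 := funext h
    have h2 : HasDerivAt α 0 0 := by
      rw [h1]; exact hasDerivAt_const _ _
    have h3 := (hα 0).unique h2
    exact (smul_eq_zero.mp h3).resolve_left (by norm_num)
  · intro h0
    simp only [qcross_eq, smul_smul] at hα hβ h0
    have hw : ∀ t, HasDerivAt (fun t => ‖α t * β t - β t * α t‖ ^ 2) 0 t := by
      intro t
      have h := (((hα t).mul (hβ t)).sub ((hβ t).mul (hα t))).norm_sq
      refine h.congr_deriv ?_
      have := inner_aux (α t) (β t) (α t * β t - β t * α t) (2/3 * (1/2))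
      simp only [Pi.sub_apply, Pi.mul_apply]
      rw [this, mul_zero]
    have hz : ∀ t, α t * β t - β t * α t = 0 := by
      intro t
      have h := is_const_of_deriv_eq_zero (fun t => (hw t).differentiableAt)
        (fun t => (hw t).deriv) t 0
      have h1 : α 0 * β 0 - β 0 * α 0 = 0 := (smul_eq_zero.mp h0).resolve_left (by norm_num)
      simp only [h1] at h
      simpa using h
    simp only [hz, smul_zero, neg_zero] at hα hβ
    exact ⟨fun t => is_const_of_deriv_eq_zero (fun t => (hα t).differentiableAt)
        (fun t => (hα t).deriv) t 0, fun t => is_const_of_deriv_eq_zero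
        (fun t => (hβ t).differentiableAt) (fun t => (hβ t).deriv) t 0⟩
end

section
/- Let A, B, θ ∈ ℝ with A ≠ B and sin θ · cos θ ≠ 0, and consider the quaternion-valued function f(t) = (cos²θ·cos(At) + sin²θ·cos(Bt)) + (cos²θ·sin(At) + sin²θ·sin(Bt))·i + sinθ·cosθ·(sin(At) − sin(Bt))·j + sinθ·cosθ·(cos(At) − cos(Bt))·k. Then f is periodic (i.e. there exists T > 0 with f(t+T) = f(t) for all t) if and only if A = 0 or B = 0 or B/A is a rational number. -/
open Quaternion

/-- The spherical component
`f(t) = (cos²θ cos At + sin²θ cos Bt) + (cos²θ sin At + sin²θ sin Bt) i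
      + sinθ cosθ (sin At − sin Bt) j + sinθ cosθ (cos At − cos Bt) k`
of a geodesic in case (3). -/
noncomputable def fComp (A B θ : ℝ) (t : ℝ) : ℍ[ℝ] :=
  (Real.cos θ ^ 2 * Real.cos (A * t) + Real.sin θ ^ 2 * Real.cos (B * t)) • (1 : ℍ[ℝ]) +
    (Real.cos θ ^ 2 * Real.sin (A * t) + Real.sin θ ^ 2 * Real.sin (B * t)) • qi +
    (Real.sin θ * Real.cos θ * (Real.sin (A * t) - Real.sin (B * t))) • qj +
    (Real.sin θ * Real.cos θ * (Real.cos (A * t) - Real.cos (B * t))) • qk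

theorem fComp_periodic_aux (A B θ T : ℝ) (hT : T ≠ 0) (m n : ℤ)
    (hA : A * T = m * (2 * Real.pi)) (hB : B * T = n * (2 * Real.pi)) :
    ∃ T > (0:ℝ), ∀ t : ℝ, fComp A B θ (t + T) = fComp A B θ t := by
  have key : ∀ t : ℝ, fComp A B θ (t + T) = fComp A B θ t := by
    intro t
    unfold fComp
    rw [mul_add, mul_add, hA, hB]
    simp only [Real.cos_add_int_mul_two_pi, Real.sin_add_int_mul_two_pi]
  rcases lt_or_gt_of_ne hT with h | h
  · refine ⟨-T, by linarith, fun t => ?_⟩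
    have := key (t + -T)
    rw [neg_add_cancel_right] at this
    exact this.symm
  · exact ⟨T, h, key⟩

/-- For `A ≠ B` and `sin θ cos θ ≠ 0`, the function `f` is periodic if and only if
`A = 0` or `B = 0` or `B/A` is rational. -/
theorem fComp_periodic_iff (A B θ : ℝ) (hAB : A ≠ B)
    (hθ : Real.sin θ * Real.cos θ ≠ 0) :
    (∃ T > (0:ℝ), ∀ t : ℝ, fComp A B θ (t + T) = fComp A B θ t) ↔
    (A = 0 ∨ B = 0 ∨ ∃ r : ℚ, B / A = (r : ℝ)) := by
  constructor
  · rintro ⟨T, hT, h⟩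
    by_cases hA : A = 0
    · exact Or.inl hA
    right; right
    have h0 := h 0
    have hre := congrArg (fun q : ℍ[ℝ] => q.re) h0
    have hk := congrArg (fun q : ℍ[ℝ] => q.imK) h0
    have e1 : qi.re = 0 := rfl
    have e2 : qj.re = 0 := rfl
    have e3 : qk.re = 0 := rfl
    have e4 : qi.imK = 0 := rfl
    have e5 : qj.imK = 0 := rfl
    have e6 : qk.imK = 1 := rfl
    simp [fComp, e1, e2, e3] at hre
    simp only [fComp, Quaternion.imK_add, Quaternion.imK_smul, e4, e5, e6,
      Quaternion.imK_one, smul_eq_mul, mul_zero, mul_one, zero_add, Real.cos_zero,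
      sub_self] at hk
    have hs := Real.sin_sq_add_cos_sq θ
    have hsc : Real.cos (A * T) = Real.cos (B * T) := by
      have : Real.sin θ * Real.cos θ * (Real.cos (A * T) - Real.cos (B * T)) = 0 := by
        exact hk
      rcases mul_eq_zero.mp this with h1 | h1
      · exact absurd h1 hθ
      · linarith
    have hB1 : Real.cos (B * T) = 1 := by
      rw [hsc] at hre
      linear_combination hre - Real.cos (B * T) * hs
    have hA1 : Real.cos (A * T) = 1 := hsc.trans hB1
    obtain ⟨m, hm⟩ := (Real.cos_eq_one_iff _).mp hA1
    obtain ⟨n, hn⟩ := (Real.cos_eq_one_iff _).mp hB1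
    refine ⟨(n : ℚ) / m, ?_⟩
    have hpi := Real.pi_pos
    have hm0 : (m : ℝ) ≠ 0 := by
      intro h1
      rw [h1, zero_mul] at hm
      exact (mul_ne_zero hA hT.ne') hm.symm
    push_cast
    rw [div_eq_div_iff hA hm0]
    have : (B * m - n * A) * (T * (2 * Real.pi)) = 0 := by
      linear_combination (B * T) * hm - (A * T) * hn
    rcases mul_eq_zero.mp this with h1 | h1
    · linarith
    · exact absurd h1 (by positivity)
  · have hpi := Real.pi_ne_zero
    intro h
    by_cases hA : A = 0
    · have hB : B ≠ 0 := fun h => hAB (hA.trans h.symm)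
      refine fComp_periodic_aux A B θ (2 * Real.pi / B) (by positivity) 0 1 ?_ ?_
      · simp [hA]
      · field_simp; simp
    rcases h with h | h | ⟨r, hr⟩
    · exact absurd h hA
    · refine fComp_periodic_aux A B θ (2 * Real.pi / A) (by positivity) 1 0 ?_ ?_
      · field_simp; simp
      · simp [h]
    · have hd : (r.den : ℝ) ≠ 0 := by exact_mod_cast r.den_ne_zero
      refine fComp_periodic_aux A B θ (r.den * (2 * Real.pi) / A) (by positivity)
        r.den r.num ?_ ?_
      · push_cast; field_simp
      · have h1 : (r : ℝ) * r.den = r.num := by exact_mod_cast r.mul_den_eq_num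
        rw [← h1, ← hr]
        field_simp
end
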